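/- For every natural number n, the F₂-vector space dimension of the n-th Hochschild homology of A(1) is: dim HH_n(A(1), A(1)) = 2n + 5 if n is even, 2n + 6 if n ≡ 1 (mod 4), and 2n + 4 if n ≡ 3 (mod 4). -/

import Mathlib

open TensorProduct MulOpposite CategoryTheory

section Machinery

variable (k : Type) [CommRing k] (S : Type) [Ring S] [Algebra k S] (P : Set (S × S))

/-- The `k`-submodule of (the restriction of scalars of) an `S`-module `N` generated by all
differences `p.1 • n - p.2 • n` for pairs `p ∈ P` and `n ∈ N`. -/
noncomputable def relSub (N : ModuleCat S) :
    Submodule k ((ModuleCat.restrictScalars (algebraMap k S)).obj N) :=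
  Submodule.span k {x | ∃ p ∈ P, ∃ n : N, x = p.1 • n - p.2 • n}

/-- The "coinvariants"-type additive functor sending an `S`-module `N` to its quotient,
as a `k`-module, by the span of all elements `p.1 • n - p.2 • n` for `p ∈ P`, `n ∈ N`. -/
noncomputable def coinvFunctor : ModuleCat S ⥤ ModuleCat k where
  obj N := ModuleCat.of k (((ModuleCat.restrictScalars (algebraMap k S)).obj N) ⧸ relSub k S P N)
  map {N N'} f := ModuleCat.ofHom <| Submodule.mapQ (relSub k S P N) (relSub k S P N')
      ((ModuleCat.restrictScalars (algebraMap k S)).map f).hom (by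
    rw [relSub, Submodule.span_le]
    rintro x ⟨p, hp, n, rfl⟩
    have : ((ModuleCat.restrictScalars (algebraMap k S)).map f).hom (p.1 • n - p.2 • n)
        = p.1 • (f n) - p.2 • (f n) := by
      show f (p.1 • n - p.2 • n) = _
      rw [map_sub, f.hom.map_smul, f.hom.map_smul]
    refine SetLike.mem_coe.2 (Submodule.mem_comap.2 (Eq.mpr (congrArg (· ∈ relSub k S P N') this) ?_))
    exact Submodule.subset_span ⟨p, hp, f n, rfl⟩)
  map_id _ := ModuleCat.hom_ext (Submodule.linearMap_qext _ (LinearMap.ext fun _ => rfl))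
  map_comp _ _ := ModuleCat.hom_ext (Submodule.linearMap_qext _ (LinearMap.ext fun _ => rfl))

instance : (coinvFunctor k S P).Additive where
  map_add := ModuleCat.hom_ext (Submodule.linearMap_qext _ (LinearMap.ext fun _ => rfl))

end Machinery

/-- Hochschild homology `HH_n(A, A)` of a `k`-algebra `A`: the `n`-th left derived functor
(that is, `Tor_n` over the enveloping algebra `A ⊗[k] Aᵐᵒᵖ`) of the coinvariants functor
`N ↦ N / span { a•n - n•a }` (which is naturally isomorphic to `A ⊗_{A ⊗[k] Aᵐᵒᵖ} -`),
evaluated at the `A`-bimodule `A` itself. -/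
noncomputable def HochschildHomology (k : Type) [CommRing k] (A : Type) [Ring A] [Algebra k A]
    (n : ℕ) : ModuleCat k :=
  letI : Module (A ⊗[k] Aᵐᵒᵖ) A := TensorProduct.Algebra.module
  ((coinvFunctor k (A ⊗[k] Aᵐᵒᵖ)
      {p | ∃ a : A, p = (a ⊗ₜ[k] (1 : Aᵐᵒᵖ), (1 : A) ⊗ₜ[k] op a)}).leftDerived n).obj
    (ModuleCat.of (A ⊗[k] Aᵐᵒᵖ) A)

/-- The relations defining `A(1)`: `Sq¹·Sq¹ = 0` and `Sq²·Sq² + Sq¹·Sq²·Sq¹ = 0`. -/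
inductive A1Rel : FreeAlgebra (ZMod 2) (Fin 2) → FreeAlgebra (ZMod 2) (Fin 2) → Prop
  | sq1 : A1Rel (FreeAlgebra.ι (ZMod 2) 0 * FreeAlgebra.ι (ZMod 2) 0) 0
  | sq2 : A1Rel (FreeAlgebra.ι (ZMod 2) 1 * FreeAlgebra.ι (ZMod 2) 1 +
      FreeAlgebra.ι (ZMod 2) 0 * FreeAlgebra.ι (ZMod 2) 1 * FreeAlgebra.ι (ZMod 2) 0) 0

/-- `A(1)`, the subalgebra of the mod 2 Steenrod algebra generated by `Sq¹` and `Sq²`, presented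
as the quotient of the free `F₂`-algebra on two generators `Sq1, Sq2` by the two-sided ideal
generated by `Sq1·Sq1` and `Sq2·Sq2 + Sq1·Sq2·Sq1`. -/
abbrev A1 : Type := RingQuot A1Rel

/-- The image of `Sq¹` in `A(1)`. -/
noncomputable def Sq1 : A1 := RingQuot.mkAlgHom (ZMod 2) A1Rel (FreeAlgebra.ι (ZMod 2) 0)

/-- The image of `Sq²` in `A(1)`. -/
noncomputable def Sq2 : A1 := RingQuot.mkAlgHom (ZMod 2) A1Rel (FreeAlgebra.ι (ZMod 2) 1)

/-- Milnor's element `Q₀ = Sq¹·Sq² + Sq²·Sq¹` in `A(1)`. -/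
noncomputable def Q0 : A1 := Sq1 * Sq2 + Sq2 * Sq1

namespace HHA1

set_option linter.unusedSimpArgs false

/-- An algebra with the presentation of `A(1)`. -/
class PA1 (A : Type) [Ring A] [Algebra (ZMod 2) A] where
  sx : A
  sy : A
  xx : sx * sx = 0
  yy : sy * sy = sx * (sy * sx)
  ind : ∀ (p : A → Prop), (∀ r : ZMod 2, p (algebraMap _ _ r)) → p sx → p sy →
    (∀ a b, p a → p b → p (a * b)) → (∀ a b, p a → p b → p (a + b)) → ∀ a, p a
  lift : ∀ {B : Type} [Ring B] [Algebra (ZMod 2) B] (X Y : B), X * X = 0 → Y * Y = X * (Y * X) →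
    A →ₐ[ZMod 2] B
  lift_x : ∀ {B : Type} [Ring B] [Algebra (ZMod 2) B] (X Y : B) (h : X * X = 0)
    (h' : Y * Y = X * (Y * X)), lift X Y h h' sx = X
  lift_y : ∀ {B : Type} [Ring B] [Algebra (ZMod 2) B] (X Y : B) (h : X * X = 0)
    (h' : Y * Y = X * (Y * X)), lift X Y h h' sy = Y

open PA1

variable {A : Type} [Ring A] [Algebra (ZMod 2) A]

lemma two_eq (a : A) : a + a = 0 := by
  have h : (2 : ZMod 2) • a = 0 := by
    rw [show (2 : ZMod 2) = 0 from rfl, zero_smul]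
  rwa [two_smul] at h

lemma eq_of_add {a b : A} (h : a + b = 0) : a = b := by
  have := congrArg (· + b) h
  simpa [add_assoc, two_eq] using this

variable [PA1 A]

lemma xx' (a : A) : sx * (sx * a) = 0 := by rw [← mul_assoc, xx, zero_mul]
lemma yy' (a : A) : sy * (sy * a) = sx * (sy * (sx * a)) := by
  rw [← mul_assoc, yy]; simp only [mul_assoc]
lemma yxyx : (sy * (sx * (sy * sx)) : A) = sx * (sy * (sx * sy)) := by
  rw [← yy, yy']
lemma yxyx' (a : A) : sy * (sx * (sy * (sx * a))) = sx * (sy * (sx * (sy * a))) := by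
  have := congrArg (· * a) yxyx
  simpa only [mul_assoc] using this

theorem A1_ind (p : A → Prop) (hs : ∀ r : ZMod 2, p (algebraMap _ _ r)) (hx : p sx) (hy : p sy)
    (hm : ∀ a b, p a → p b → p (a * b)) (ha : ∀ a b, p a → p b → p (a + b)) (a : A) : p a :=
  PA1.ind p hs hx hy hm ha a

/-- The eight basis words. -/
noncomputable def W : Fin 8 → A :=
  ![1, sx, sy, sx * sy, sy * sx, sx * (sy * sx), sy * (sx * sy),
    sx * (sy * (sx * sy))]

noncomputable def comb : (Fin 8 → ZMod 2) →ₗ[ZMod 2] A := Fintype.linearCombination (ZMod 2) W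

lemma comb_apply (c : Fin 8 → ZMod 2) : (comb c : A) = c 0 • 1 + c 1 • sx + c 2 • sy
   + c 3 • (sx * sy) + c 4 • (sy * sx) + c 5 • (sx * (sy * sx))
   + c 6 • (sy * (sx * sy)) + c 7 • (sx * (sy * (sx * sy))) := by
  simp [comb, Fintype.linearCombination_apply, Fin.sum_univ_eight, W]

def Lx (c : Fin 8 → ZMod 2) : Fin 8 → ZMod 2 := ![0, c 0, 0, c 2, 0, c 4, 0, c 6]
def Ly (c : Fin 8 → ZMod 2) : Fin 8 → ZMod 2 := ![0, 0, c 0, 0, c 1, c 2, c 3, c 5]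
def Rx (c : Fin 8 → ZMod 2) : Fin 8 → ZMod 2 := ![0, c 0, 0, 0, c 2, c 3, 0, c 6]
def Ry (c : Fin 8 → ZMod 2) : Fin 8 → ZMod 2 := ![0, 0, c 0, c 1, 0, c 2, c 4, c 5]

lemma x_comb (c) : (sx * comb c : A) = comb (Lx c) := by
  simp [comb_apply, Lx, mul_add, xx, xx']

lemma y_comb (c) : (sy * comb c : A) = comb (Ly c) := by
  simp [comb_apply, Ly, mul_add, xx, xx', yy, yy', yxyx, yxyx']

lemma comb_x (c) : (comb c * sx : A) = comb (Rx c) := by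
  simp [comb_apply, Rx, add_mul, mul_assoc, xx, xx', yy, yy', yxyx]

lemma comb_y (c) : (comb c * sy : A) = comb (Ry c) := by
  simp [comb_apply, Ry, add_mul, mul_assoc, xx, xx', yy, yy', yxyx]

lemma comb_one : (comb ![1,0,0,0,0,0,0,0] : A) = 1 := by simp [comb_apply]

lemma comb_surj : Function.Surjective (comb (A := A)) := by
  have key : ∀ a : A, ∀ c, ∃ c', a * comb c = comb c' := by
    intro a
    induction a using A1_ind with
    | hs r => intro c; exact ⟨r • c, by rw [map_smul, Algebra.smul_def]⟩
    | hx => exact fun c => ⟨_, x_comb c⟩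
    | hy => exact fun c => ⟨_, y_comb c⟩
    | hm a b h1 h2 =>
      intro c
      obtain ⟨d, hd⟩ := h2 c
      obtain ⟨e, he⟩ := h1 d
      exact ⟨e, by rw [mul_assoc, hd, he]⟩
    | ha a b h1 h2 =>
      intro c
      obtain ⟨d, hd⟩ := h2 c
      obtain ⟨e, he⟩ := h1 c
      exact ⟨e + d, by rw [add_mul, hd, he, map_add]⟩
  intro a
  obtain ⟨c, hc⟩ := key a ![1,0,0,0,0,0,0,0]
  exact ⟨c, by rw [← hc, comb_one, mul_one]⟩

def LxL : Module.End (ZMod 2) (Fin 8 → ZMod 2) where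
  toFun := Lx
  map_add' a b := by ext i; fin_cases i <;> simp [Lx]
  map_smul' a b := by ext i; fin_cases i <;> simp [Lx]
def LyL : Module.End (ZMod 2) (Fin 8 → ZMod 2) where
  toFun := Ly
  map_add' a b := by ext i; fin_cases i <;> simp [Ly]
  map_smul' a b := by ext i; fin_cases i <;> simp [Ly]

/-- The left regular representation in coordinates. -/
noncomputable def rep : A →ₐ[ZMod 2] Module.End (ZMod 2) (Fin 8 → ZMod 2) :=
  PA1.lift LxL LyL (by
      apply LinearMap.ext; intro v; ext i
      fin_cases i <;> simp [LxL, Lx]) (by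
      apply LinearMap.ext; intro v; ext i
      fin_cases i <;> simp [LxL, Lx, LyL, Ly])

lemma rep_x : rep (sx : A) = LxL := lift_x ..
lemma rep_y : rep (sy : A) = LyL := lift_y ..

lemma rep_comb (c) : rep (comb c : A) ![1,0,0,0,0,0,0,0] = c := by
  simp only [comb_apply, map_add, map_smul, map_mul, rep_x, rep_y, map_one]
  ext i
  fin_cases i <;> simp [LxL, Lx, LyL, Ly]

lemma comb_inj : Function.Injective (comb (A := A)) := by
  intro c d h
  rw [← rep_comb (A := A) c, h, rep_comb]

noncomputable def eA : (Fin 8 → ZMod 2) ≃ₗ[ZMod 2] A :=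
  LinearEquiv.ofBijective comb ⟨comb_inj, comb_surj⟩

instance : Module.Finite (ZMod 2) A := Module.Finite.equiv eA
lemma finrank_A1 : Module.finrank (ZMod 2) A = 8 := by
  rw [← (eA (A := A)).finrank_eq]; simp

noncomputable def augm : A →ₐ[ZMod 2] ZMod 2 := PA1.lift 0 0 (by simp) (by simp)
lemma augm_x : augm (sx : A) = 0 := lift_x ..
lemma augm_y : augm (sy : A) = 0 := lift_y ..
lemma augm_comb (c) : augm (comb c : A) = c 0 := by
  simp [comb_apply, augm_x, augm_y]

/-- the element sy sx sy -/
noncomputable def w : A := sy * (sx * sy)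

/-! Facts about one-sided ideals of `A1`. -/
lemma F1 (u : A) (h : u * sx = 0) : ∃ u', u = u' * sx := by
  obtain ⟨c, rfl⟩ := comb_surj u
  rw [comb_x, ← map_zero (comb (A := A))] at h
  have h := congrFun (comb_inj h)
  have h0 := h 1; have h1 := h 4; have h2 := h 5; have h3 := h 7
  simp [Rx] at h0 h1 h2 h3
  refine ⟨comb ![c 1, 0, c 4, c 5, 0, 0, c 7, 0], ?_⟩
  rw [comb_x]
  congr 1; ext i; fin_cases i <;> simp [Rx, *]

lemma F2 (v : A) (h : v * (sx * sy) = 0) : ∃ (v' : A) (r : ZMod 2), v = v' * sx + r • w := by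
  obtain ⟨c, rfl⟩ := comb_surj v
  rw [← mul_assoc, comb_x, comb_y, ← map_zero (comb (A := A))] at h
  have h := congrFun (comb_inj h)
  have h0 := h 3; have h1 := h 6; have h2 := h 7
  simp [Rx, Ry] at h0 h1 h2
  refine ⟨comb ![c 1, 0, c 4, c 5, 0, 0, c 7, 0], c 6, ?_⟩
  have : (w : A) = comb ![0,0,0,0,0,0,1,0] := by simp [comb_apply, w]
  rw [comb_x, this, ← map_smul, ← map_add]
  congr 1; ext i; fin_cases i <;> simp [Rx, *]

lemma F3 (v : A) (h : v * sy = 0) : ∃ v' : A, v = v' * (sx * sy) := by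
  obtain ⟨c, rfl⟩ := comb_surj v
  rw [comb_y, ← map_zero (comb (A := A))] at h
  have h := congrFun (comb_inj h)
  have h0 := h 2; have h1 := h 3; have h2 := h 5; have h3 := h 6; have h4 := h 7
  simp [Ry] at h0 h1 h2 h3 h4
  refine ⟨comb ![c 3, 0, c 6, c 7, 0, 0, 0, 0], ?_⟩
  rw [← mul_assoc, comb_x, comb_y]
  congr 1; ext i; fin_cases i <;> simp [Rx, Ry, *]

lemma F4 (u v : A) (h : u * sx + v * sy = 0) : ∃ v' : A, v = v' * sy := by
  obtain ⟨c, rfl⟩ := comb_surj v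
  obtain ⟨d, rfl⟩ := comb_surj u
  rw [comb_y, comb_x, ← map_add, ← map_zero (comb (A := A))] at h
  have h := congrFun (comb_inj h)
  have h0 := h 2; have h1 := h 3; have h3 := h 6
  simp [Rx, Ry] at h0 h1 h3
  refine ⟨comb ![c 2, c 3, c 5, 0, c 6, c 7, 0, 0], ?_⟩
  rw [comb_y]
  congr 1; ext i; fin_cases i <;> simp [Ry, *]

lemma F5 (u : A) (h : augm u = 0) : ∃ p q : A, u = p * sx + q * sy := by
  obtain ⟨c, rfl⟩ := comb_surj u
  rw [augm_comb] at h
  refine ⟨comb ![c 1, 0, c 4, c 5, 0, 0, 0, 0], comb ![c 2, c 3, 0, 0, c 6, c 7, 0, 0], ?_⟩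
  rw [comb_x, comb_y, ← map_add]
  congr 1; ext i; fin_cases i <;> simp [Rx, Ry, *]

lemma F6 (u v : A) (h : v * sx + u * w = 0) : augm u = 0 := by
  obtain ⟨c, rfl⟩ := comb_surj v
  obtain ⟨d, rfl⟩ := comb_surj u
  rw [w, ← mul_assoc, ← mul_assoc, comb_x, comb_y, comb_x, comb_y, ← map_add,
    ← map_zero (comb (A := A))] at h
  have h := congrFun (comb_inj h)
  have h0 := h 6
  simp [Rx, Ry] at h0
  rw [augm_comb, h0]

end HHA1

namespace HHA1

set_option linter.unusedSimpArgs false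
set_option linter.unusedSectionVars false

open PA1

variable {A : Type} [Ring A] [Algebra (ZMod 2) A] [PA1 A]

lemma z2 (r : ZMod 2) : r = 0 ∨ r = 1 := by decide +revert

/-- enveloping algebra -/
abbrev S (A : Type) [Ring A] [Algebra (ZMod 2) A] : Type := A ⊗[ZMod 2] Aᵐᵒᵖ

lemma S_two (a : S A) : a + a = 0 := by
  have h : (2 : ZMod 2) • a = 0 := by
    rw [show (2 : ZMod 2) = 0 from rfl, zero_smul]
  rwa [two_smul] at h

lemma S_eq_of_add {a b : S A} (h : a + b = 0) : a = b := by
  have := congrArg (· + b) h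
  simpa [add_assoc, S_two] using this

lemma S_add_of_eq {a b : S A} (h : a = b) : a + b = 0 := by rw [h, S_two]

lemma S_two' (a b : S A) : a + (a + b) = b := by rw [← add_assoc, S_two, zero_add]

noncomputable def dx : S A := sx ⊗ₜ 1 + 1 ⊗ₜ op sx
noncomputable def dy : S A := sy ⊗ₜ 1 + sx ⊗ₜ op sx + 1 ⊗ₜ op sy

lemma dxx : (dx : S A) * dx = 0 := by
  simp only [dx, mul_add, add_mul, Algebra.TensorProduct.tmul_mul_tmul, mul_one, one_mul,
    ← op_mul, xx, op_zero, zero_tmul, tmul_zero, zero_add, add_zero, S_two]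

lemma dyy : (dy : S A) * dy = dx * (dy * dx) := by
  apply S_eq_of_add
  simp only [dx, dy, mul_add, add_mul, Algebra.TensorProduct.tmul_mul_tmul, mul_one, one_mul,
    ← op_mul, xx, xx', yy, yy', mul_assoc, op_zero, zero_tmul, tmul_zero, zero_add, add_zero,
    mul_zero, zero_mul]
  abel_nf
  simp only [two_zsmul, two_nsmul, S_two, add_zero, zero_add]

/-- the algebra map `a ↦ ∑ a' ⊗ χ(a'')` -/
noncomputable def δ : A →ₐ[ZMod 2] S A := PA1.lift dx dy dxx dyy

lemma δx : δ (sx : A) = dx := lift_x ..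
lemma δy : δ (sy : A) = dy := lift_y ..

noncomputable def Ψ : (Fin 8 → A) →ₗ[ZMod 2] S A where
  toFun a := ∑ j, (1 ⊗ₜ op (W j)) * δ (a j)
  map_add' a b := by simp [mul_add, Finset.sum_add_distrib]
  map_smul' r a := by
    rw [RingHom.id_apply, Finset.smul_sum]
    refine Finset.sum_congr rfl fun j _ => ?_
    rw [Pi.smul_apply, map_smul, mul_smul_comm]

lemma Ψ_apply (a : Fin 8 → A) : Ψ a = ∑ j, (1 ⊗ₜ op (W j)) * δ (a j) := rfl

lemma Ψ_mul (a : Fin 8 → A) (c : A) : Ψ (fun j => a j * c) = Ψ a * δ c := by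
  simp [Ψ_apply, Finset.sum_mul, mul_assoc]

lemma mem_R (q : A) (a : A) : ((1 : A) ⊗ₜ[ZMod 2] op q) * δ a ∈ LinearMap.range (Ψ (A := A)) := by
  obtain ⟨c, rfl⟩ := comb_surj q
  refine ⟨fun k => c k • a, ?_⟩
  rw [Ψ_apply, comb, Fintype.linearCombination_apply, Finset.op_sum, tmul_sum, Finset.sum_mul]
  refine Finset.sum_congr rfl fun j _ => ?_
  rw [map_smul, mul_smul_comm, op_smul, tmul_smul, smul_mul_assoc]

lemma right_R (q : A) (s : S A) (hs : s ∈ LinearMap.range (Ψ (A := A))) :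
    ((1 : A) ⊗ₜ[ZMod 2] op q) * s ∈ LinearMap.range (Ψ (A := A)) := by
  obtain ⟨a, rfl⟩ := hs
  rw [Ψ_apply, Finset.mul_sum]
  refine Submodule.sum_mem _ fun j _ => ?_
  rw [← mul_assoc, Algebra.TensorProduct.tmul_mul_tmul, mul_one, ← op_mul]
  exact mem_R _ _

lemma x_R (s : S A) (hs : s ∈ LinearMap.range (Ψ (A := A))) :
    (sx ⊗ₜ[ZMod 2] (1 : Aᵐᵒᵖ)) * s ∈ LinearMap.range (Ψ (A := A)) := by
  obtain ⟨a, rfl⟩ := hs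
  rw [Ψ_apply, Finset.mul_sum]
  refine Submodule.sum_mem _ fun j _ => ?_
  have e : (sx ⊗ₜ[ZMod 2] (1 : Aᵐᵒᵖ)) = dx + 1 ⊗ₜ op sx := by
    rw [dx, add_assoc, S_two, add_zero]
  have e2 : (sx ⊗ₜ[ZMod 2] (1 : Aᵐᵒᵖ)) * (1 ⊗ₜ op (W j) * δ (a j))
      = 1 ⊗ₜ op (W j) * δ (sx * a j) + 1 ⊗ₜ op (W j) * (1 ⊗ₜ op sx * δ (a j)) := by
    rw [map_mul, ← mul_add, ← add_mul, δx, ← e, ← mul_assoc, ← mul_assoc]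
    simp
  rw [e2]
  exact Submodule.add_mem _ (mem_R _ _) (right_R _ _ (mem_R _ _))

lemma y_R (s : S A) (hs : s ∈ LinearMap.range (Ψ (A := A))) :
    (sy ⊗ₜ[ZMod 2] (1 : Aᵐᵒᵖ)) * s ∈ LinearMap.range (Ψ (A := A)) := by
  obtain ⟨a, rfl⟩ := hs
  rw [Ψ_apply, Finset.mul_sum]
  refine Submodule.sum_mem _ fun j _ => ?_
  have e : (sy ⊗ₜ[ZMod 2] (1 : Aᵐᵒᵖ)) = dy + (sx ⊗ₜ op sx + 1 ⊗ₜ op sy) := by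
    rw [dy, add_assoc (sy ⊗ₜ[ZMod 2] (1 : Aᵐᵒᵖ)), add_assoc, S_two, add_zero]
  have e2 : (sy ⊗ₜ[ZMod 2] (1 : Aᵐᵒᵖ)) * (1 ⊗ₜ op (W j) * δ (a j))
      = 1 ⊗ₜ op (W j) * δ (sy * a j) + 1 ⊗ₜ op (W j) *
        (1 ⊗ₜ op sx * (sx ⊗ₜ 1 * (1 ⊗ₜ op 1 * δ (a j))) + (1 ⊗ₜ op sy * δ (a j))) := by
    have : (1 ⊗ₜ op sx * (sx ⊗ₜ 1 * (1 ⊗ₜ op 1 * δ (a j))) : S A)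
        = (sx ⊗ₜ op sx) * δ (a j) := by
      simp only [← mul_assoc]; simp
    rw [this, map_mul, ← add_mul, ← mul_add, ← add_mul, δy, ← e, ← mul_assoc, ← mul_assoc]
    simp
  rw [e2]
  exact Submodule.add_mem _ (mem_R _ _) (right_R _ _ (Submodule.add_mem _
    (right_R _ _ (x_R _ (mem_R _ _))) (mem_R _ _)))

lemma left_R (p : A) : ∀ (s : S A), s ∈ LinearMap.range (Ψ (A := A)) →
    (p ⊗ₜ[ZMod 2] (1 : Aᵐᵒᵖ)) * s ∈ LinearMap.range (Ψ (A := A)) := by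
  induction p using A1_ind with
  | hs r =>
    intro s hs
    have : (algebraMap (ZMod 2) A r ⊗ₜ[ZMod 2] (1 : Aᵐᵒᵖ)) * s = r • s := by
      rw [Algebra.algebraMap_eq_smul_one, ← smul_tmul', ← Algebra.TensorProduct.one_def,
        smul_mul_assoc, one_mul]
    rw [this]
    exact Submodule.smul_mem _ _ hs
  | hx => exact x_R
  | hy => exact y_R
  | hm a b h1 h2 =>
    intro s hs
    have := h1 _ (h2 _ hs)
    rwa [← mul_assoc, Algebra.TensorProduct.tmul_mul_tmul, one_mul] at this
  | ha a b h1 h2 =>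
    intro s hs
    rw [add_tmul, add_mul]
    exact Submodule.add_mem _ (h1 s hs) (h2 s hs)

lemma Ψ_surj : Function.Surjective (Ψ (A := A)) := by
  rw [← LinearMap.range_eq_top, eq_top_iff]
  rintro s -
  induction s using TensorProduct.induction_on with
  | zero => exact Submodule.zero_mem _
  | add a b h1 h2 => exact Submodule.add_mem _ h1 h2
  | tmul p q =>
    have := left_R p _ (mem_R (unop q) 1)
    simpa using this

instance : Module.Finite (ZMod 2) Aᵐᵒᵖ := Module.Finite.equiv (opLinearEquiv (ZMod 2))
lemma finrank_op : Module.finrank (ZMod 2) Aᵐᵒᵖ = 8 := by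
  rw [← (opLinearEquiv (ZMod 2) (M := A)).finrank_eq, finrank_A1]

lemma Ψ_inj : Function.Injective (Ψ (A := A)) := by
  refine (LinearMap.injective_iff_surjective_of_finrank_eq_finrank (f := Ψ (A := A)) ?_).2 Ψ_surj
  rw [Module.finrank_tensorProduct, Module.finrank_pi_fintype, finrank_op, finrank_A1]
  simp [finrank_A1]

noncomputable abbrev modA (A : Type) [Ring A] [Algebra (ZMod 2) A] : Module (S A) A :=
  TensorProduct.Algebra.module

attribute [local instance] modA

lemma smul_one_tmul (p q : A) (m : A) : (p ⊗ₜ[ZMod 2] op q) • m = p * m * q := by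
  rw [TensorProduct.Algebra.smul_def]
  simp [mul_assoc]

lemma δ_smul_one (a : A) : δ a • (1 : A) = augm a • (1 : A) := by
  induction a using A1_ind with
  | hs r =>
    rw [AlgHom.commutes, AlgHom.commutes, Algebra.algebraMap_eq_smul_one,
      Algebra.TensorProduct.one_def, smul_tmul', ← op_one, smul_one_tmul]
    simp
  | hx =>
    rw [δx, dx, add_smul, ← op_one, smul_one_tmul, smul_one_tmul, augm_x]
    simp [two_eq]
  | hy =>
    rw [δy, dy, add_smul, add_smul, ← op_one, smul_one_tmul, smul_one_tmul, smul_one_tmul, augm_y]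
    simp [two_eq, xx]
  | hm a b h1 h2 =>
    rw [map_mul, mul_smul, h2, map_mul, mul_comm, mul_smul, ← h1]
    have : ∀ (r : ZMod 2) (s : S A) (m : A), s • r • m = r • s • m := by
      intro r s m
      rcases z2 r with rfl | rfl
      · rw [zero_smul, zero_smul, smul_zero]
      · rw [one_smul, one_smul]
    rw [this]
  | ha a b h1 h2 => rw [map_add, add_smul, h1, h2, map_add, add_smul]

lemma Ψ_smul_one (a : Fin 8 → A) : Ψ a • (1 : A) = comb (fun j => augm (a j)) := by
  rw [Ψ_apply, Finset.sum_smul, comb, Fintype.linearCombination_apply]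
  refine Finset.sum_congr rfl fun j _ => ?_
  rw [mul_smul, δ_smul_one]
  generalize augm (a j) = r
  rcases z2 r with rfl | rfl
  · rw [zero_smul, zero_smul, smul_zero]
  · rw [one_smul, one_smul, smul_one_tmul, one_mul, one_mul]

lemma G1 (u : S A) (h : u * δ sx = 0) : ∃ u', u = u' * δ sx := by
  obtain ⟨a, rfl⟩ := Ψ_surj u
  rw [← Ψ_mul, ← map_zero (Ψ (A := A))] at h
  have h := congrFun (Ψ_inj h)
  choose b hb using fun j => F1 _ (h j)
  exact ⟨Ψ b, by rw [← Ψ_mul]; congr 1; ext1 j; exact hb j⟩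

lemma G2 (u : S A) (h : u * δ (sx * sy) = 0) : ∃ v r, u = v * δ sx + r * δ w := by
  obtain ⟨a, rfl⟩ := Ψ_surj u
  rw [← Ψ_mul, ← map_zero (Ψ (A := A))] at h
  have h := congrFun (Ψ_inj h)
  choose b r hb using fun j => F2 _ (h j)
  exact ⟨Ψ b, Ψ (fun j => r j • 1), by
    rw [← Ψ_mul, ← Ψ_mul, ← map_add]; congr 1; ext1 j; simpa using hb j⟩

lemma G3 (u : S A) (h : u * δ sy = 0) : ∃ v, u = v * δ (sx * sy) := by
  obtain ⟨a, rfl⟩ := Ψ_surj u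
  rw [← Ψ_mul, ← map_zero (Ψ (A := A))] at h
  have h := congrFun (Ψ_inj h)
  choose b hb using fun j => F3 _ (h j)
  exact ⟨Ψ b, by rw [← Ψ_mul]; congr 1; ext1 j; exact hb j⟩

lemma G4 (u v : S A) (h : u * δ sx + v * δ sy = 0) : ∃ v', v = v' * δ sy := by
  obtain ⟨a, rfl⟩ := Ψ_surj u
  obtain ⟨b, rfl⟩ := Ψ_surj v
  rw [← Ψ_mul, ← Ψ_mul, ← map_add, ← map_zero (Ψ (A := A))] at h
  have h := congrFun (Ψ_inj h)
  choose c hc using fun j => F4 _ _ (h j)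
  exact ⟨Ψ c, by rw [← Ψ_mul]; congr 1; ext1 j; exact hc j⟩

lemma G5 (u : S A) (h : u • (1 : A) = 0) : ∃ p q, u = p * δ sx + q * δ sy := by
  obtain ⟨a, rfl⟩ := Ψ_surj u
  rw [Ψ_smul_one, ← map_zero (comb (A := A))] at h
  have h := congrFun (comb_inj h)
  choose b c hb using fun j => F5 _ (h j)
  exact ⟨Ψ b, Ψ c, by
    rw [← Ψ_mul, ← Ψ_mul, ← map_add]; congr 1; ext1 j; exact hb j⟩

lemma G6 (u v : S A) (h : v * δ sx + u * δ w = 0) : u • (1 : A) = 0 := by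
  obtain ⟨a, rfl⟩ := Ψ_surj u
  obtain ⟨b, rfl⟩ := Ψ_surj v
  rw [← Ψ_mul, ← Ψ_mul, ← map_add, ← map_zero (Ψ (A := A))] at h
  have h := congrFun (Ψ_inj h)
  rw [Ψ_smul_one, ← map_zero (comb (A := A))]
  congr 1; ext1 j
  exact F6 _ _ (h j)

end HHA1

namespace HHA1

set_option linter.unusedSimpArgs false
set_option linter.unusedSectionVars false

open PA1

variable {A : Type} [Ring A] [Algebra (ZMod 2) A] [PA1 A]

noncomputable def cc (m : ℕ) : A := if m = 1 then sy else if m = 2 then sx * sy else w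
noncomputable def ee (m : ℕ) : A := if m = 2 then sy else if m = 3 then sx * sy else sx

lemma wy : (w * sy : A) = 0 := by simp [w, mul_assoc, yy, xx']
lemma wxy : (w * (sx * sy) : A) = 0 := by
  simp only [w, mul_assoc, yxyx', yy, xx', mul_zero]
lemma yw : (sy * w : A) = 0 := by simp [w, yy', xx']
lemma xyw : (sx * (sy * w) : A) = 0 := by simp [yw]
lemma ww : (w * w : A) = 0 := by
  rw [show (w * w : A) = sy * (sx * (sy * w)) by simp only [w, mul_assoc], yw]; simp
lemma wx : (w * sx : A) = sx * w := by simp only [w, mul_assoc, yxyx]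

lemma w_cc (m : ℕ) : (w * cc m : A) = 0 := by
  unfold cc; split_ifs
  exacts [wy, wxy, ww]
lemma cc_w (m : ℕ) : (cc m * w : A) = 0 := by
  unfold cc; split_ifs
  exacts [yw, by rw [mul_assoc, xyw], ww]

lemma cc_x (m : ℕ) (hm : 2 ≤ m) : (cc m * sx + ee m * cc (m - 1) : A) = 0 := by
  obtain rfl | rfl | hm : m = 2 ∨ m = 3 ∨ 4 ≤ m := by omega
  · simp [cc, ee, yy, mul_assoc, two_eq]
  · simp [cc, ee, mul_assoc, wx]
    simp [w, two_eq]
  · have h1 : m ≠ 1 := by omega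
    have h2 : m ≠ 2 := by omega
    have h3 : m ≠ 3 := by omega
    have h4 : m - 1 ≠ 1 := by omega
    have h5 : m - 1 ≠ 2 := by omega
    simp [cc, ee, h1, h2, h3, h4, h5, wx, two_eq]

lemma ee_ee (m : ℕ) (hm : 3 ≤ m) : (ee m * ee (m - 1) : A) = 0 := by
  obtain rfl | rfl | hm : m = 3 ∨ m = 4 ∨ 5 ≤ m := by omega
  · simp [ee, yy, mul_assoc, xx']
  · simp [ee, xx']
  · have h2 : m ≠ 2 := by omega
    have h3 : m ≠ 3 := by omega
    have h4 : m - 1 ≠ 2 := by omega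
    have h5 : m - 1 ≠ 3 := by omega
    simp [ee, h2, h3, h4, h5, xx]

lemma cc_big (m : ℕ) (hm : 3 ≤ m) : (cc m : A) = w := by
  have h1 : m ≠ 1 := by omega
  have h2 : m ≠ 2 := by omega
  simp [cc, h1, h2]

lemma ee_big (m : ℕ) (hm : 4 ≤ m) : (ee m : A) = sx := by
  have h1 : m ≠ 3 := by omega
  have h2 : m ≠ 2 := by omega
  simp [ee, h1, h2]

attribute [local instance] modA

theorem seq_exact : ∀ (n : ℕ) (u v : ℕ → S A),
    (∀ j, 4 * j + 1 ≤ n → u j * δ sx + v j * δ (cc (n - 4 * j)) = 0) →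
    (∀ j, 4 * j + 2 ≤ n → v j * δ (ee (n - 4 * j)) +
      (if 4 * j + 4 ≤ n then u (j + 1) * δ w else 0) = 0) →
    (n = 0 → u 0 • (1 : A) = 0) →
    ∃ p q : ℕ → S A, (∀ j, 4 * j ≤ n → u j = p j * δ sx + q j * δ (cc (n + 1 - 4 * j))) ∧
      (∀ j, 4 * j + 1 ≤ n → v j = q j * δ (ee (n + 1 - 4 * j)) +
        if 4 * j + 3 ≤ n then p (j + 1) * δ w else 0)
  | 0, u, v, _, _, h3 => by
    obtain ⟨p, q, h⟩ := G5 _ (h3 rfl)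
    refine ⟨fun _ => p, fun _ => q, fun j hj => ?_, fun j hj => by omega⟩
    obtain rfl : j = 0 := by omega
    simpa [cc] using h
  | 1, u, v, h1, _, _ => by
    have e1 := h1 0 (by norm_num)
    simp only [cc, mul_zero, Nat.sub_zero, if_true] at e1
    obtain ⟨q, hq⟩ := G4 _ _ e1
    have : (u 0 + q * δ (sx * sy)) * δ sx = 0 := by
      rw [← e1, hq, add_mul, mul_assoc, mul_assoc, ← map_mul, ← map_mul, yy, mul_assoc]
    obtain ⟨p, hp⟩ := G1 _ this
    refine ⟨fun _ => p, fun _ => q, fun j hj => ?_, fun j hj => ?_⟩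
    · obtain rfl : j = 0 := by omega
      simp [cc, ← hp, add_assoc, S_two]
    · obtain rfl : j = 0 := by omega
      simp [ee, ← hq]
  | 2, u, v, h1, h2, _ => by
    have e1 := h1 0 (by norm_num)
    have e2 := h2 0 (by norm_num)
    simp [cc, ee] at e1 e2
    obtain ⟨q, hq⟩ := G3 _ e2
    have : (u 0 + q * δ w) * δ sx = 0 := by
      rw [← e1, hq, add_mul, ← map_mul, mul_assoc, mul_assoc, ← map_mul, ← map_mul, wx]
      simp only [w, mul_assoc]
    obtain ⟨p, hp⟩ := G1 _ this
    refine ⟨fun _ => p, fun _ => q, fun j hj => ?_, fun j hj => ?_⟩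
    · obtain rfl : j = 0 := by omega
      simp [cc, ← hp, add_assoc, S_two]
    · obtain rfl : j = 0 := by omega
      simp [ee, hq]
  | 3, u, v, h1, h2, _ => by
    have e1 := h1 0 (by norm_num)
    have e2 := h2 0 (by norm_num)
    simp only [cc, ee, mul_zero, Nat.sub_zero] at e1 e2
    norm_num at e1 e2
    rw [← map_mul] at e2
    obtain ⟨q, r, hq⟩ := G2 _ e2
    have : (u 0 + q * δ w) * δ sx = 0 := by
      rw [← e1, hq, add_mul, add_mul, mul_assoc, mul_assoc, mul_assoc, ← map_mul, ← map_mul,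
        ← map_mul, wx, ww]
      simp
    obtain ⟨p, hp⟩ := G1 _ this
    refine ⟨fun j => if j = 0 then p else r, fun _ => q, fun j hj => ?_, fun j hj => ?_⟩
    · obtain rfl : j = 0 := by omega
      simp [cc, ← hp, add_assoc, S_two]
    · obtain rfl : j = 0 := by omega
      simp [ee, hq]
  | n + 4, u, v, h1, h2, _ => by
    have e1 := h1 0 (by omega)
    have e2 := h2 0 (by omega)
    rw [mul_zero, Nat.sub_zero, cc_big _ (by omega)] at e1
    rw [mul_zero, Nat.sub_zero, ee_big _ (by omega), if_pos (by omega)] at e2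
    have hs : ∀ j, n + 4 - 4 * (j + 1) = n - 4 * j := fun j => by omega
    have hs' : ∀ j, n + 4 + 1 - 4 * (j + 1) = n + 1 - 4 * j := fun j => by omega
    obtain ⟨p, q, hp, hq⟩ := seq_exact n (fun j => u (j + 1)) (fun j => v (j + 1))
      (fun j hj => by
        have := h1 (j + 1) (by omega)
        rwa [hs] at this)
      (fun j hj => by
        have := h2 (j + 1) (by omega)
        rw [hs] at this
        refine Eq.trans ?_ this
        congr 1
        exact if_congr (by omega) rfl rfl)
      (fun _ => G6 _ _ e2)
    have e3 := hp 0 (by omega)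
    simp only [zero_add] at e3
    have e4 : (v 0 + p 0 * δ w) * δ sx = 0 := by
      rw [← e2, e3, add_mul, add_mul, mul_assoc, mul_assoc, mul_assoc, ← map_mul, ← map_mul,
        ← map_mul, cc_w, wx]
      simp
    obtain ⟨q', hq'⟩ := G1 _ e4
    have e5 : v 0 = q' * δ sx + p 0 * δ w := by rw [← hq', add_assoc, S_two, add_zero]
    have e6 : (u 0 + q' * δ w) * δ sx = 0 := by
      rw [← e1, e5, add_mul, add_mul, mul_assoc, mul_assoc, mul_assoc, ← map_mul, ← map_mul,
        ← map_mul, wx, ww]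
      simp
    obtain ⟨p', hp'⟩ := G1 _ e6
    refine ⟨fun j => Nat.casesOn j p' p, fun j => Nat.casesOn j q' q, fun j hj => ?_,
      fun j hj => ?_⟩
    · cases j with
      | zero =>
        rw [mul_zero, Nat.sub_zero, cc_big _ (by omega)]
        show u 0 = p' * δ sx + q' * δ w
        rw [← hp', add_assoc, S_two, add_zero]
      | succ j =>
        rw [hs']
        exact hp j (by omega)
    · cases j with
      | zero =>
        rw [mul_zero, Nat.sub_zero, ee_big _ (by omega), if_pos (by omega)]
        exact e5
      | succ j =>
        rw [hs', hq j (by omega)]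
        congr 1
        exact if_congr (by omega) rfl rfl

/-! ### The complex -/

section cx
variable {R : Type} [Ring R] {M : Type} [AddCommGroup M] [Module R M]

abbrev XX (M : Type) (n : ℕ) : Type := (Fin (n / 4 + 1) → M) × (Fin ((n + 3) / 4) → M)

def ex {m : ℕ} (u : Fin m → M) (j : ℕ) : M := if h : j < m then u ⟨j, h⟩ else 0

lemma ex_add {m : ℕ} (u v : Fin m → M) (j : ℕ) : ex (u + v) j = ex u j + ex v j := by
  unfold ex; split_ifs <;> simp

lemma ex_smul {m : ℕ} (r : R) (u : Fin m → M) (j : ℕ) : ex (r • u) j = r • ex u j := by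
  unfold ex; split_ifs <;> simp

lemma ex_mk {m : ℕ} (f : ℕ → M) (j : ℕ) (hj : j < m) : ex (fun i : Fin m => f i) j = f j := by
  simp [ex, hj]

lemma ex_out {m : ℕ} (f : Fin m → M) (j : ℕ) (hj : ¬ j < m) : ex f j = 0 := by
  simp [ex, hj]

lemma ex_fin {m : ℕ} (f : Fin m → M) (j : Fin m) : ex f j = f j := by
  simp [ex]

/-- the differential, for a right action `ρ` -/
noncomputable def DD (ρ : A → M →ₗ[R] M) (n : ℕ) : XX M (n + 1) →ₗ[R] XX M n where
  toFun f := (fun j => ρ sx (ex f.1 j) + ρ (cc (n + 1 - 4 * j)) (ex f.2 j),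
    fun j => ρ (ee (n + 1 - 4 * j)) (ex f.2 j) + ρ w (ex f.1 (j + 1)))
  map_add' f g := by
    ext j <;> simp [ex_add] <;> abel
  map_smul' r f := by
    ext j <;> simp [ex_smul]

lemma DD_fst (ρ : A → M →ₗ[R] M) (n : ℕ) (f : XX M (n + 1)) (j : ℕ) (hj : 4 * j ≤ n) :
    ex (DD ρ n f).1 j = ρ sx (ex f.1 j) + ρ (cc (n + 1 - 4 * j)) (ex f.2 j) :=
  ex_mk (fun j => ρ sx (ex f.1 j) + ρ (cc (n + 1 - 4 * j)) (ex f.2 j)) j (by omega)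

lemma DD_snd (ρ : A → M →ₗ[R] M) (n : ℕ) (f : XX M (n + 1)) (j : ℕ) (hj : 4 * j + 1 ≤ n) :
    ex (DD ρ n f).2 j = ρ (ee (n + 1 - 4 * j)) (ex f.2 j) + ρ w (ex f.1 (j + 1)) :=
  ex_mk (fun j => ρ (ee (n + 1 - 4 * j)) (ex f.2 j) + ρ w (ex f.1 (j + 1))) j (by omega)

end cx

noncomputable def ρS (c : A) : S A →ₗ[S A] S A := LinearMap.toSpanSingleton (S A) (S A) (δ c)
lemma ρS_apply (c : A) (s : S A) : ρS c s = s * δ c := rfl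

lemma XX_ext {M : Type} [AddCommGroup M] {n : ℕ} (f g : XX M n)
    (h1 : ∀ j, 4 * j ≤ n → ex f.1 j = ex g.1 j) (h2 : ∀ j, 4 * j + 1 ≤ n → ex f.2 j = ex g.2 j) :
    f = g := by
  ext j
  · have := h1 j (by omega)
    simpa [ex_fin] using this
  · have := h2 j (by omega)
    simpa [ex_fin] using this

lemma ex_zero {M : Type} [AddCommGroup M] {m : ℕ} (j : ℕ) : ex (0 : Fin m → M) j = 0 := by
  simp [ex]

theorem DD_DD (n : ℕ) (f : XX (S A) (n + 2)) : DD (ρS (A := A)) n (DD (ρS (A := A)) (n + 1) f) = 0 := by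
  apply XX_ext
  · intro j hj
    rw [DD_fst _ _ _ _ hj, DD_fst _ _ _ _ (by omega), DD_snd _ _ _ _ (by omega)]
    simp only [ρS_apply, add_mul, mul_assoc, ← map_mul, xx, w_cc, map_zero, mul_zero, add_zero,
      zero_add, Prod.fst_zero, ex_zero]
    rw [← mul_add, ← map_add]
    have := cc_x (A := A) (n + 2 - 4 * j) (by omega)
    rw [show n + 2 - 4 * j - 1 = n + 1 - 4 * j by omega] at this
    erw [this]
    simp
  · intro j hj
    rw [DD_snd _ _ _ _ hj, DD_snd _ _ _ _ (by omega)]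
    have := ee_ee (A := A) (n + 2 - 4 * j) (by omega)
    rw [show n + 2 - 4 * j - 1 = n + 1 - 4 * j by omega] at this
    by_cases h : 4 * (j + 1) ≤ n + 1
    · rw [DD_fst _ _ _ _ h, ee_big (n + 1 - 4 * j) (by omega)]
      rw [ee_big (n + 1 - 4 * j) (by omega)] at this
      simp only [ρS_apply, add_mul, mul_assoc, ← map_mul, xx, cc_w, map_zero, mul_zero, add_zero,
        zero_add, Prod.snd_zero, ex_zero, wx, this, S_two]
    · rw [ex_out (DD _ _ _).1 _ (by omega)]
      simp only [ρS_apply, add_mul, mul_assoc, ← map_mul, map_zero, mul_zero, add_zero,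
        zero_add, Prod.snd_zero, ex_zero, this, zero_mul]
      by_cases h' : 4 * (j + 1) ≤ n + 2
      · have h3 : n + 1 - 4 * j = 3 := by omega
        simp [h3, ee, wxy, - map_mul]
      · rw [ex_out _ _ (by omega), zero_mul]

theorem DD_exact (n : ℕ) (f : XX (S A) (n + 1)) (hf : DD (ρS (A := A)) n f = 0) :
    ∃ g, DD (ρS (A := A)) (n + 1) g = f := by
  obtain ⟨p, q, hp, hq⟩ := seq_exact (n + 1) (ex f.1) (ex f.2)
    (fun j hj => by
      have := DD_fst (ρS (A := A)) n f j (by omega)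
      rw [hf] at this
      simpa [ex_zero, ρS_apply] using this.symm)
    (fun j hj => by
      have := DD_snd (ρS (A := A)) n f j (by omega)
      rw [hf] at this
      split_ifs with h
      · simpa [ex_zero, ρS_apply] using this.symm
      · rw [ex_out f.1 (j + 1) (by omega)] at this
        simpa [ex_zero, ρS_apply] using this.symm)
    (by simp)
  refine ⟨(fun j => p j, fun j => q j), ?_⟩
  apply XX_ext
  · intro j hj
    rw [DD_fst _ _ _ _ hj, ex_mk _ _ (by omega), ex_mk _ _ (by omega), hp j hj]
    rfl
  · intro j hj
    rw [DD_snd _ _ _ _ hj, ex_mk _ _ (by omega), hq j hj]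
    split_ifs with h
    · rw [ex_mk _ _ (by omega)]; rfl
    · rw [ex_out _ _ (by omega)]; simp; rfl

theorem DD_exact0 (f : XX (S A) 0) (hf : f.1 0 • (1 : A) = 0) :
    ∃ g, DD (ρS (A := A)) 0 g = f := by
  obtain ⟨p, q, hp, hq⟩ := seq_exact 0 (ex f.1) (ex f.2) (by simp) (by simp)
    (fun _ => hf)
  refine ⟨(fun j => p j, fun j => q j), ?_⟩
  apply XX_ext
  · intro j hj
    rw [DD_fst _ _ _ _ hj, ex_mk _ _ (by omega), ex_mk _ _ (by omega), hp j hj]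
    rfl
  · intro j hj
    omega

theorem DD_aug (f : XX (S A) 1) : (DD (ρS (A := A)) 0 f).1 0 • (1 : A) = 0 := by
  have := DD_fst (ρS (A := A)) 0 f 0 (by omega)
  have h2 : ex (DD (ρS (A := A)) 0 f).1 0 = (DD (ρS (A := A)) 0 f).1 0 := rfl
  rw [← h2, this]
  simp only [ρS_apply, add_smul, mul_smul, cc]
  simp [δ_smul_one, augm_x, augm_y]

end HHA1

namespace HHA1

section gen
open CategoryTheory.Limits

variable {R : Type} [Ring R] (X : ℕ → Type) [∀ n, AddCommGroup (X n)] [∀ n, Module R (X n)]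
  (d : ∀ n, X (n + 1) →ₗ[R] X n) (dd : ∀ n x, d n (d (n + 1) x) = 0)
  {M : Type} [AddCommGroup M] [Module R M] (p : X 0 →ₗ[R] M) (pd : ∀ x, p (d 0 x) = 0)

noncomputable def gcx : ChainComplex (ModuleCat R) ℕ :=
  ChainComplex.of (fun n => ModuleCat.of R (X n)) (fun n => ModuleCat.ofHom (d n))
    (fun n => by
      ext x
      exact dd n x)

lemma gcx_d (n : ℕ) : (gcx X d dd).d (n + 1) n = ModuleCat.ofHom (d n) :=
  ChainComplex.of_d (fun n => ModuleCat.of R (X n)) (fun n => ModuleCat.ofHom (d n)) n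

noncomputable def gπ : gcx X d dd ⟶ (ChainComplex.single₀ (ModuleCat R)).obj (ModuleCat.of R M) :=
  ((gcx X d dd).toSingle₀Equiv _).symm ⟨ModuleCat.ofHom p, by
    rw [gcx_d]
    ext x
    exact pd x⟩

noncomputable def gres [∀ n, Module.Projective R (X n)]
    (hp : Function.Surjective p) (h0 : ∀ x, p x = 0 → ∃ y, d 0 y = x)
    (h1 : ∀ n x, d n x = 0 → ∃ y, d (n + 1) y = x) :
    ProjectiveResolution (ModuleCat.of R M) where
  complex := gcx X d dd
  projective n := (IsProjective.iff_projective (X n)).1 inferInstance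
  π := gπ X d dd p pd
  quasiIso := ⟨fun m => by
    cases m with
    | zero =>
      rw [ChainComplex.quasiIsoAt₀_iff, ShortComplex.quasiIso_iff_of_zeros' _ rfl rfl rfl]
      constructor
      · rw [ShortComplex.moduleCat_exact_iff]
        intro x hx
        obtain ⟨y, hy⟩ := h0 x hx
        refine ⟨y, ?_⟩
        refine Eq.trans ?_ hy
        exact congrArg (fun f => f.hom y) (gcx_d X d dd 0)
      · rw [ModuleCat.epi_iff_surjective]
        exact hp
    | succ m =>
      rw [quasiIsoAt_iff_exactAt' (hL := ChainComplex.exactAt_succ_single_obj ..),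
          HomologicalComplex.exactAt_iff' _ (m + 2) (m + 1) m (by simp) (by simp)]
      rw [ShortComplex.moduleCat_exact_iff]
      intro x hx
      obtain ⟨y, hy⟩ := h1 m x (by
        refine Eq.trans ?_ hx
        exact (congrArg (fun f => f.hom x) (gcx_d X d dd m)).symm)
      refine ⟨y, ?_⟩
      refine Eq.trans ?_ hy
      exact congrArg (fun f => f.hom y) (gcx_d X d dd (m + 1))⟩

end gen


set_option linter.unusedSectionVars false
open PA1

variable {A : Type} [Ring A] [Algebra (ZMod 2) A] [PA1 A]

section
attribute [local instance] modA

noncomputable def augS : XX (S A) 0 →ₗ[S A] A where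
  toFun f := f.1 0 • (1 : A)
  map_add' f g := by rw [Prod.fst_add, Pi.add_apply, add_smul]
  map_smul' r f := by
    rw [Prod.smul_fst, Pi.smul_apply, RingHom.id_apply, smul_eq_mul, mul_smul]

instance (n : ℕ) : Module.Projective (S A) (XX (S A) n) := inferInstance

noncomputable def RES : ProjectiveResolution (ModuleCat.of (S A) A) :=
  gres (XX (S A)) (DD (ρS (A := A))) DD_DD augS DD_aug
    (fun a => ⟨(fun _ => a ⊗ₜ 1, 0), by
      show (a ⊗ₜ[ZMod 2] (1 : Aᵐᵒᵖ)) • (1 : A) = a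
      rw [← op_one, smul_one_tmul]; simp⟩)
    DD_exact0 DD_exact

end
end HHA1

namespace HHA1
set_option linter.unusedSectionVars false
open PA1

variable {A : Type} [Ring A] [Algebra (ZMod 2) A] [PA1 A]

noncomputable def κ : S A →ₗ[ZMod 2] A :=
  TensorProduct.lift (LinearMap.mk₂ (ZMod 2) (fun (p : A) (q : Aᵐᵒᵖ) => unop q * p)
    (fun _ _ _ => mul_add _ _ _) (fun _ _ _ => mul_smul_comm _ _ _)
    (fun _ _ _ => add_mul _ _ _) (fun _ _ _ => smul_mul_assoc _ _ _))

lemma κ_tmul (p : A) (q : Aᵐᵒᵖ) : κ (p ⊗ₜ[ZMod 2] q) = unop q * p := rfl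

lemma κ_bal (a : A) (s : S A) : κ ((a ⊗ₜ 1) * s) = κ ((1 ⊗ₜ op a) * s) := by
  induction s using TensorProduct.induction_on with
  | zero => simp
  | add s t h1 h2 => rw [mul_add, mul_add, map_add, map_add, h1, h2]
  | tmul p q =>
    rw [Algebra.TensorProduct.tmul_mul_tmul, Algebra.TensorProduct.tmul_mul_tmul, κ_tmul, κ_tmul]
    simp [mul_assoc]

noncomputable def act (t : S A) : A →ₗ[ZMod 2] A where
  toFun v := κ ((v ⊗ₜ 1) * t)
  map_add' u v := by rw [add_tmul, add_mul, map_add]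
  map_smul' r v := by rw [← smul_tmul', smul_mul_assoc, map_smul]; rfl

lemma act_apply (t : S A) (v : A) : act t v = κ ((v ⊗ₜ 1) * t) := rfl

lemma κ_mul (s t : S A) : κ (s * t) = act t (κ s) := by
  rw [act_apply]
  induction s using TensorProduct.induction_on with
  | zero => simp
  | add s s' h1 h2 => rw [add_mul, map_add, map_add, add_tmul, add_mul, map_add, h1, h2]
  | tmul p q =>
    induction t using TensorProduct.induction_on with
    | zero => simp
    | add s t h1 h2 => rw [mul_add, mul_add, map_add, map_add, h1, h2]
    | tmul r u =>
      rw [Algebra.TensorProduct.tmul_mul_tmul, Algebra.TensorProduct.tmul_mul_tmul, κ_tmul, κ_tmul,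
        κ_tmul]
      simp [mul_assoc]

noncomputable def ρT (c : A) : A →ₗ[ZMod 2] A := act (δ c)

lemma ρT_mul (c d v : A) : ρT (c * d) v = ρT d (ρT c v) := by
  rw [ρT, ρT, ρT, map_mul, act_apply, ← mul_assoc, κ_mul, act_apply (δ c)]

lemma ρT_x (v : A) : ρT sx v = v * sx + sx * v := by
  rw [ρT, δx, act_apply, dx, mul_add, map_add, Algebra.TensorProduct.tmul_mul_tmul,
    Algebra.TensorProduct.tmul_mul_tmul, κ_tmul, κ_tmul]
  simp

lemma ρT_y (v : A) : ρT sy v = v * sy + sx * v * sx + sy * v := by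
  rw [ρT, δy, act_apply, dy, mul_add, mul_add, map_add, map_add,
    Algebra.TensorProduct.tmul_mul_tmul,
    Algebra.TensorProduct.tmul_mul_tmul, Algebra.TensorProduct.tmul_mul_tmul, κ_tmul, κ_tmul,
    κ_tmul]
  simp [mul_assoc]

/-- coinvariants -/
abbrev PS (A : Type) [Ring A] [Algebra (ZMod 2) A] : Set (S A × S A) :=
  {p | ∃ a : A, p = (a ⊗ₜ[ZMod 2] (1 : Aᵐᵒᵖ), (1 : A) ⊗ₜ[ZMod 2] op a)}

lemma κ_rel {N : Type} [AddCommGroup N] [Module (S A) N] (L : S A →ₗ[S A] N) (s : S A) :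
    (L s - L (κ s ⊗ₜ 1) : N) ∈ relSub (ZMod 2) (S A) (PS A) (ModuleCat.of (S A) N) := by
  induction s using TensorProduct.induction_on with
  | zero =>
    simp only [map_zero, zero_tmul, sub_zero]
    exact Submodule.zero_mem _
  | add s t h1 h2 =>
    rw [map_add, map_add, add_tmul, map_add, add_sub_add_comm]
    exact Submodule.add_mem _ h1 h2
  | tmul p q =>
    have h : L (p ⊗ₜ q) = ((1 : A) ⊗ₜ[ZMod 2] op (unop q)) • L (p ⊗ₜ 1) := by
      rw [← map_smul, smul_eq_mul, Algebra.TensorProduct.tmul_mul_tmul]; simp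
    have h' : L (κ (p ⊗ₜ q) ⊗ₜ 1) = ((unop q) ⊗ₜ[ZMod 2] (1 : Aᵐᵒᵖ)) • L (p ⊗ₜ 1) := by
      rw [← map_smul, smul_eq_mul, Algebra.TensorProduct.tmul_mul_tmul, κ_tmul]; simp
    rw [h, h', ← neg_sub]
    exact (relSub (ZMod 2) (S A) (PS A) (ModuleCat.of (S A) N)).neg_mem
      (Submodule.subset_span ⟨_, ⟨unop q, rfl⟩, L (p ⊗ₜ 1), rfl⟩)

noncomputable def Φ0 (n : ℕ) : XX (S A) n →+ XX A n where
  toFun f := (fun j => κ (f.1 j), fun j => κ (f.2 j))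
  map_zero' := by ext <;> simp
  map_add' f g := by ext <;> simp

noncomputable def Φ1 (n : ℕ) :
    ((ModuleCat.restrictScalars (algebraMap (ZMod 2) (S A))).obj (ModuleCat.of (S A) (XX (S A) n)))
      →ₗ[ZMod 2] XX A n :=
  AddMonoidHom.toZModLinearMap 2 (Φ0 n)

lemma relSub_le (n : ℕ) : relSub (ZMod 2) (S A) (PS A) (ModuleCat.of (S A) (XX (S A) n)) ≤
    LinearMap.ker (Φ1 n) := by
  rw [relSub, Submodule.span_le]
  rintro x ⟨p, ⟨a, rfl⟩, f, rfl⟩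
  show Φ0 n (((a ⊗ₜ[ZMod 2] (1 : Aᵐᵒᵖ)) • (f : XX (S A) n)) - ((1 : A) ⊗ₜ[ZMod 2] op a) • (f : XX (S A) n)) = 0
  rw [map_sub, sub_eq_zero]
  ext j
  · exact κ_bal _ _
  · exact κ_bal _ _

lemma le_relSub (n : ℕ) :
    LinearMap.ker (Φ1 n) ≤ relSub (ZMod 2) (S A) (PS A) (ModuleCat.of (S A) (XX (S A) n)) := by
  intro f hf
  have hf : Φ0 n (f : XX (S A) n) = 0 := hf
  let f' : XX (S A) n := f
  have h1 : ∀ j, κ (f'.1 j) = 0 := fun j => congrFun (congrArg Prod.fst hf) j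
  have h2 : ∀ j, κ (f'.2 j) = 0 := fun j => congrFun (congrArg Prod.snd hf) j
  have key : f' =
      ∑ j, (LinearMap.inl (S A) _ _ ∘ₗ LinearMap.single (S A) (fun _ => S A) j) (f'.1 j) +
      ∑ j, (LinearMap.inr (S A) _ _ ∘ₗ LinearMap.single (S A) (fun _ => S A) j) (f'.2 j) := by
    simp only [LinearMap.comp_apply, ← map_sum]
    simp only [LinearMap.coe_single, Finset.univ_sum_single]
    simp
  show f' ∈ relSub (ZMod 2) (S A) (PS A) (ModuleCat.of (S A) (XX (S A) n))
  rw [key]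
  refine Submodule.add_mem _ (Submodule.sum_mem _ fun j _ => ?_) (Submodule.sum_mem _ fun j _ => ?_)
  · have := κ_rel (LinearMap.inl (S A) _ (Fin ((n + 3) / 4) → S A) ∘ₗ
      LinearMap.single (S A) (fun _ : Fin (n / 4 + 1) => S A) j) (f'.1 j)
    rwa [h1, zero_tmul, map_zero, sub_zero] at this
  · have := κ_rel (LinearMap.inr (S A) (Fin (n / 4 + 1) → S A) _ ∘ₗ
      LinearMap.single (S A) (fun _ : Fin ((n + 3) / 4) => S A) j) (f'.2 j)
    rwa [h2, zero_tmul, map_zero, sub_zero] at this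

noncomputable abbrev FF (A : Type) [Ring A] [Algebra (ZMod 2) A] :=
  coinvFunctor (ZMod 2) (S A) (PS A)

noncomputable def Φ2 (n : ℕ) :
    (((ModuleCat.restrictScalars (algebraMap (ZMod 2) (S A))).obj
      (ModuleCat.of (S A) (XX (S A) n))) ⧸
        relSub (ZMod 2) (S A) (PS A) (ModuleCat.of (S A) (XX (S A) n))) →ₗ[ZMod 2] XX A n :=
  Submodule.liftQ (relSub (ZMod 2) (S A) (PS A) (ModuleCat.of (S A) (XX (S A) n)))
    (Φ1 n) (relSub_le n)

lemma Φ2_bij (n : ℕ) : Function.Bijective (Φ2 (A := A) n) := by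
  constructor
  · rw [← LinearMap.ker_eq_bot]
    exact Submodule.ker_liftQ_eq_bot _ _ _ (le_relSub n)
  · intro a
    refine ⟨Submodule.Quotient.mk ((fun j => a.1 j ⊗ₜ 1, fun j => a.2 j ⊗ₜ 1) : XX (S A) n), ?_⟩
    show ((fun j => κ (a.1 j ⊗ₜ 1), fun j => κ (a.2 j ⊗ₜ 1)) : XX A n) = a
    ext j <;> simp [κ_tmul]

noncomputable def Φ (n : ℕ) :
    (FF A).obj (ModuleCat.of (S A) (XX (S A) n)) ≅ ModuleCat.of (ZMod 2) (XX A n) :=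
  (LinearEquiv.ofBijective (Φ2 n) (Φ2_bij n)).toModuleIso

lemma ex_κ {m : ℕ} (f : Fin m → S A) (j : ℕ) : ex (fun j => κ (f j)) j = κ (ex f j) := by
  unfold ex; split_ifs <;> simp

lemma Φ_DD (n : ℕ) (f : XX (S A) (n + 1)) :
    Φ0 n (DD (ρS (A := A)) n f) = DD (ρT (A := A)) n (Φ0 (n + 1) f) := by
  ext j
  · show κ (ρS sx (ex f.1 j) + ρS (cc (n + 1 - 4 * j)) (ex f.2 j)) =
      ρT sx (ex (fun j => κ (f.1 j)) j) + ρT (cc (n + 1 - 4 * j)) (ex (fun j => κ (f.2 j)) j)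
    rw [ex_κ, ex_κ, map_add, ρS_apply, ρS_apply, κ_mul, κ_mul]; rfl
  · show κ (ρS (ee (n + 1 - 4 * j)) (ex f.2 j) + ρS w (ex f.1 (j + 1))) =
      ρT (ee (n + 1 - 4 * j)) (ex (fun j => κ (f.2 j)) j) + ρT w (ex (fun j => κ (f.1 j)) (j + 1))
    rw [ex_κ, ex_κ, map_add, ρS_apply, ρS_apply, κ_mul, κ_mul]; rfl

end HHA1

namespace HHA1
set_option linter.unusedSectionVars false
open PA1

section lin
variable {k : Type} [Field k]

lemma finrank_sc (T : ShortComplex (ModuleCat.{0} k)) [Module.Finite k T.X₂] :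
    Module.finrank k T.homology + Module.finrank k (LinearMap.range T.f.hom)
      + Module.finrank k (LinearMap.range T.g.hom) = Module.finrank k T.X₂ := by
  rw [(T.moduleCatHomologyIso.toLinearEquiv).finrank_eq]
  have h1 := Submodule.finrank_quotient_add_finrank (LinearMap.range T.moduleCatToCycles)
  have h2 := LinearMap.finrank_range_add_finrank_ker T.g.hom
  have h3 : Module.finrank k (LinearMap.range T.moduleCatToCycles) =
      Module.finrank k (LinearMap.range T.f.hom) := by
    have : LinearMap.range T.f.hom = (LinearMap.range T.moduleCatToCycles).map
        (LinearMap.ker T.g.hom).subtype := by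
      rw [← LinearMap.range_comp]; rfl
    rw [this]
    exact (LinearEquiv.finrank_eq (Submodule.equivMapOfInjective _ (Submodule.subtype_injective _) _))
  have h4 : Module.finrank k T.moduleCatLeftHomologyData.H = Module.finrank k
    (LinearMap.ker T.g.hom ⧸ LinearMap.range T.moduleCatToCycles) := rfl
  omega

variable (X : ℕ → Type) [∀ n, AddCommGroup (X n)] [∀ n, Module k (X n)] [∀ n, Module.Finite k (X n)]
  (d : ∀ n, X (n + 1) →ₗ[k] X n) (dd : ∀ n x, d n (d (n + 1) x) = 0)

lemma gcx_fin0 : Module.finrank k ((gcx X d dd).homology 0) +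
    Module.finrank k (LinearMap.range (d 0)) = Module.finrank k (X 0) := by
  have e := (gcx X d dd).homologyIsoSc' 1 0 0 (by simp) (by simp)
  have : Module.Finite k ((gcx X d dd).sc' 1 0 0).X₂ := inferInstanceAs (Module.Finite k (X 0))
  have h := finrank_sc ((gcx X d dd).sc' 1 0 0)
  have h1 : Module.finrank k (LinearMap.range ((gcx X d dd).sc' 1 0 0).f.hom) =
      Module.finrank k (LinearMap.range (d 0)) :=
    congrArg (fun f => Module.finrank k (LinearMap.range (ModuleCat.Hom.hom f)))
      (gcx_d X d dd 0)
  have h2 : ((gcx X d dd).sc' 1 0 0).g = 0 := (gcx X d dd).shape _ _ (by simp)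
  have h3 : Module.finrank k (LinearMap.range ((gcx X d dd).sc' 1 0 0).g.hom) = 0 := by
    rw [h2, ModuleCat.hom_zero, LinearMap.range_zero, finrank_bot]
  have h4 := (e.toLinearEquiv).finrank_eq
  have h5 : Module.finrank k ((gcx X d dd).sc' 1 0 0).X₂ = Module.finrank k (X 0) := rfl
  omega

lemma gcx_fin1 (n : ℕ) : Module.finrank k ((gcx X d dd).homology (n + 1)) +
    Module.finrank k (LinearMap.range (d (n + 1))) + Module.finrank k (LinearMap.range (d n))
      = Module.finrank k (X (n + 1)) := by
  have e := (gcx X d dd).homologyIsoSc' (n + 2) (n + 1) n (by simp) (by simp)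
  have : Module.Finite k ((gcx X d dd).sc' (n + 2) (n + 1) n).X₂ :=
    inferInstanceAs (Module.Finite k (X (n + 1)))
  have h := finrank_sc ((gcx X d dd).sc' (n + 2) (n + 1) n)
  have h1 : Module.finrank k (LinearMap.range ((gcx X d dd).sc' (n + 2) (n + 1) n).f.hom) =
      Module.finrank k (LinearMap.range (d (n + 1))) :=
    congrArg (fun f => Module.finrank k (LinearMap.range (ModuleCat.Hom.hom f)))
      (gcx_d X d dd (n + 1))
  have h2 : Module.finrank k (LinearMap.range ((gcx X d dd).sc' (n + 2) (n + 1) n).g.hom) =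
      Module.finrank k (LinearMap.range (d n)) :=
    congrArg (fun f => Module.finrank k (LinearMap.range (ModuleCat.Hom.hom f)))
      (gcx_d X d dd n)
  have h4 := (e.toLinearEquiv).finrank_eq
  have h5 : Module.finrank k ((gcx X d dd).sc' (n + 2) (n + 1) n).X₂
    = Module.finrank k (X (n + 1)) := rfl
  omega

end lin

variable {A : Type} [Ring A] [Algebra (ZMod 2) A] [PA1 A]

lemma Φ0_surj (n : ℕ) : Function.Surjective (Φ0 (A := A) n) := by
  intro a
  refine ⟨((fun j => a.1 j ⊗ₜ 1, fun j => a.2 j ⊗ₜ 1) : XX (S A) n), ?_⟩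
  show ((fun j => κ (a.1 j ⊗ₜ 1), fun j => κ (a.2 j ⊗ₜ 1)) : XX A n) = a
  ext j <;> simp [κ_tmul]

lemma DT_DT (n : ℕ) (f : XX A (n + 2)) : DD (ρT (A := A)) n (DD (ρT (A := A)) (n + 1) f) = 0 := by
  obtain ⟨g, rfl⟩ := Φ0_surj _ f
  rw [← Φ_DD, ← Φ_DD, DD_DD, map_zero]

noncomputable def TT (A : Type) [Ring A] [Algebra (ZMod 2) A] [PA1 A] :
    ChainComplex (ModuleCat (ZMod 2)) ℕ := gcx (XX A) (DD (ρT (A := A))) DT_DT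

noncomputable def cxIso : ((FF A).mapHomologicalComplex (ComplexShape.down ℕ)).obj
    (gcx (XX (S A)) (DD (ρS (A := A))) DD_DD) ≅ TT A :=
  HomologicalComplex.Hom.isoOfComponents (fun n => Φ n) (by
    rintro i j (rfl : j + 1 = i)
    have h1 : (TT A).d (j + 1) j = ModuleCat.ofHom (DD (ρT (A := A)) j) := gcx_d ..
    have h2 : (((FF A).mapHomologicalComplex (ComplexShape.down ℕ)).obj
      (gcx (XX (S A)) (DD (ρS (A := A))) DD_DD)).d (j + 1) j =
        (FF A).map (ModuleCat.ofHom (DD (ρS (A := A)) j)) :=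
      congrArg (fun f => (FF A).map f) (gcx_d (XX (S A)) (DD (ρS (A := A))) DD_DD j)
    rw [h1, h2]
    apply ModuleCat.hom_ext
    apply Submodule.linearMap_qext
    apply LinearMap.ext
    intro f
    exact (Φ_DD j f).symm)

section
attribute [local instance] modA

noncomputable def HHiso (n : ℕ) : HochschildHomology (ZMod 2) A n ≅ (TT A).homology n :=
  (RES (A := A)).isoLeftDerivedObj (FF A) n ≪≫
    (HomologicalComplex.homologyFunctor _ _ n).mapIso cxIso
end

end HHA1

namespace HHA1
set_option linter.unusedSectionVars false
set_option linter.unusedSimpArgs false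
open PA1

variable {A : Type} [Ring A] [Algebra (ZMod 2) A] [PA1 A]

lemma zadd (r : ZMod 2) : r + r = 0 := by decide +revert

lemma ρT_x_comb (c : Fin 8 → ZMod 2) :
    ρT sx (comb c : A) = comb ![0, 0, 0, c 2, c 2, c 3 + c 4, 0, 0] := by
  rw [ρT_x, comb_x, x_comb, ← map_add]
  congr 1
  ext i
  fin_cases i <;> simp [Rx, Lx, zadd]

lemma ρT_y_comb (c : Fin 8 → ZMod 2) :
    ρT sy (comb c : A) = comb ![0, 0, 0, c 1, c 1, c 2, c 3 + c 4, 0] := by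
  rw [ρT_y, comb_y, x_comb, comb_x, y_comb, ← map_add, ← map_add]
  have e : Ry c + Rx (Lx c) + Ly c = ![0, 0, 0, c 1, c 1, c 2, c 3 + c 4, 0] := by
    ext i
    fin_cases i <;> simp [Rx, Lx, Ry, Ly, zadd]
    exact add_comm _ _
  rw [e]

lemma ρT_xy (v : A) : ρT (sx * sy) v = 0 := by
  obtain ⟨c, rfl⟩ := comb_surj v
  rw [ρT_mul, ρT_x_comb, ρT_y_comb]
  convert map_zero (comb (A := A))
  ext i
  fin_cases i <;> simp [zadd]

lemma ρT_w (v : A) : ρT w v = 0 := by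
  rw [w, ρT_mul, ρT_xy]

noncomputable def mx : (ZMod 2 × ZMod 2) →ₗ[ZMod 2] A :=
  comb ∘ₗ { toFun := fun p => ![0, 0, 0, p.1, p.1, p.2, 0, 0]
            map_add' := by intro p q; ext i; fin_cases i <;> simp
            map_smul' := by intro p q; ext i; fin_cases i <;> simp }

noncomputable def my : (ZMod 2 × ZMod 2 × ZMod 2) →ₗ[ZMod 2] A :=
  comb ∘ₗ { toFun := fun p => ![0, 0, 0, p.1, p.1, p.2.1, p.2.2, 0]
            map_add' := by intro p q; ext i; fin_cases i <;> simp
            map_smul' := by intro p q; ext i; fin_cases i <;> simp }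

lemma mx_apply (p) : mx (A := A) p = comb ![0, 0, 0, p.1, p.1, p.2, 0, 0] := rfl
lemma my_apply (p) : my (A := A) p = comb ![0, 0, 0, p.1, p.1, p.2.1, p.2.2, 0] := rfl

noncomputable def Ix (A : Type) [Ring A] [Algebra (ZMod 2) A] [PA1 A] : Submodule (ZMod 2) A :=
  LinearMap.range (ρT (A := A) sx)
noncomputable def Iy (A : Type) [Ring A] [Algebra (ZMod 2) A] [PA1 A] : Submodule (ZMod 2) A :=
  LinearMap.range (ρT (A := A) sy)

lemma Ix_eq : Ix A = LinearMap.range (mx (A := A)) := by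
  apply le_antisymm
  · rintro _ ⟨v, rfl⟩
    obtain ⟨c, rfl⟩ := comb_surj v
    exact ⟨(c 2, c 3 + c 4), by rw [ρT_x_comb, mx_apply]⟩
  · rintro _ ⟨p, rfl⟩
    exact ⟨comb ![0, 0, p.1, p.2, 0, 0, 0, 0], by rw [ρT_x_comb, mx_apply]; simp⟩

lemma Iy_eq : Iy A = LinearMap.range (my (A := A)) := by
  apply le_antisymm
  · rintro _ ⟨v, rfl⟩
    obtain ⟨c, rfl⟩ := comb_surj v
    exact ⟨(c 1, c 2, c 3 + c 4), by rw [ρT_y_comb, my_apply]⟩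
  · rintro _ ⟨p, rfl⟩
    exact ⟨comb ![0, p.1, p.2.1, p.2.2, 0, 0, 0, 0], by rw [ρT_y_comb, my_apply]; simp⟩

lemma Ix_le : Ix A ≤ Iy A := by
  rw [Ix_eq, Iy_eq]
  rintro _ ⟨p, rfl⟩
  exact ⟨(p.1, p.2, 0), rfl⟩

lemma finrank_Ix : Module.finrank (ZMod 2) (Ix A) = 2 := by
  rw [Ix_eq, LinearMap.finrank_range_of_inj]
  · simp
  · intro p q h
    have := comb_inj h
    have h3 := congrFun this 3
    have h5 := congrFun this 5
    exact Prod.ext h3 h5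

lemma finrank_Iy : Module.finrank (ZMod 2) (Iy A) = 3 := by
  rw [Iy_eq, LinearMap.finrank_range_of_inj]
  · simp
  · intro p q h
    have := comb_inj h
    have h3 := congrFun this 3
    have h5 := congrFun this 5
    have h6 := congrFun this 6
    exact Prod.ext h3 (Prod.ext h5 h6)

noncomputable def tsub (A : Type) [Ring A] [Algebra (ZMod 2) A] [PA1 A] (m : ℕ) :
    Submodule (ZMod 2) A := if m = 0 then Iy A else Ix A
noncomputable def esub (A : Type) [Ring A] [Algebra (ZMod 2) A] [PA1 A] (m : ℕ) :
    Submodule (ZMod 2) A := if m = 1 then Iy A else if m = 2 then ⊥ else Ix A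

noncomputable def emb (n : ℕ) : ((∀ j : Fin (n / 4 + 1), tsub A (n - 4 * j)) ×
    (∀ j : Fin ((n + 3) / 4), esub A (n - 4 * j))) →ₗ[ZMod 2] XX A n where
  toFun f := (fun j => f.1 j, fun j => f.2 j)
  map_add' f g := by ext <;> simp
  map_smul' f g := by ext <;> simp

lemma emb_inj (n : ℕ) : Function.Injective (emb (A := A) n) := by
  intro f g h
  refine Prod.ext (funext fun j => Subtype.ext ?_) (funext fun j => Subtype.ext ?_)
  · exact congrFun (congrArg Prod.fst h) j
  · exact congrFun (congrArg Prod.snd h) j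

lemma cc_mem (m : ℕ) (u v : A) : ρT sx u + ρT (cc (m + 1)) v ∈ tsub A m := by
  unfold tsub cc
  obtain rfl | rfl | h : m = 0 ∨ m = 1 ∨ 2 ≤ m := by omega
  · simp only [zero_add, if_true]
    exact Submodule.add_mem _ (Ix_le ⟨u, rfl⟩) ⟨v, rfl⟩
  · simp [ρT_xy]
    exact ⟨u, rfl⟩
  · rw [if_neg (by omega), if_neg (by omega), if_neg (by omega), ρT_w, add_zero]
    exact ⟨u, rfl⟩

lemma mem_tsub (m : ℕ) (a : A) (h : a ∈ tsub A m) :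
    ∃ u v : A, ρT sx u + ρT (cc (m + 1)) v = a ∧ (m ≠ 0 → v = 0) := by
  unfold tsub cc at *
  split_ifs at h with hm
  · subst hm
    obtain ⟨v, rfl⟩ := h
    exact ⟨0, v, by simp⟩
  · obtain ⟨v, rfl⟩ := h
    exact ⟨v, 0, by simp [hm]⟩

lemma cc_zero (m : ℕ) (hm : m ≠ 0) (v : A) : ρT (cc (m + 1)) v = 0 := by
  unfold cc
  rw [if_neg (by omega)]
  split_ifs
  · exact ρT_xy v
  · exact ρT_w v

lemma ee_mem (m : ℕ) (u v : A) : ρT (ee (m + 1)) v + ρT w u ∈ esub A m := by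
  rw [ρT_w, add_zero]
  unfold ee esub
  obtain rfl | rfl | h : m = 1 ∨ m = 2 ∨ (m ≠ 1 ∧ m ≠ 2) := by omega
  · simp only [Nat.reduceAdd, if_true]
    exact ⟨v, rfl⟩
  · simp [ρT_xy]
  · rw [if_neg (by omega), if_neg (by omega), if_neg (by omega), if_neg (by omega)]
    exact ⟨v, rfl⟩

lemma mem_esub (m : ℕ) (a : A) (h : a ∈ esub A m) :
    ∃ v : A, ρT (ee (m + 1)) v = a := by
  unfold esub ee at *
  split_ifs at h with hm hm'
  · subst hm
    exact h
  · rw [Submodule.mem_bot] at h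
    exact ⟨0, by simp [h]⟩
  · rw [if_neg (by omega), if_neg (by omega)]
    exact h

lemma range_DD (n : ℕ) : LinearMap.range (DD (ρT (A := A)) n) = LinearMap.range (emb (A := A) n) := by
  apply le_antisymm
  · rintro _ ⟨f, rfl⟩
    refine ⟨(fun j => ⟨ρT sx (ex f.1 j) + ρT (cc (n + 1 - 4 * j)) (ex f.2 j), ?_⟩,
      fun j => ⟨ρT (ee (n + 1 - 4 * j)) (ex f.2 j) + ρT w (ex f.1 (j + 1)), ?_⟩), rfl⟩
    · rw [show n + 1 - 4 * (j : ℕ) = (n - 4 * j) + 1 by omega]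
      exact cc_mem _ _ _
    · rw [show n + 1 - 4 * (j : ℕ) = (n - 4 * j) + 1 by omega]
      exact ee_mem _ _ _
  · rintro _ ⟨f, rfl⟩
    choose u v huv hv using fun j => mem_tsub _ _ (f.1 j).2
    choose v' hv' using fun j => mem_esub _ _ (f.2 j).2
    refine ⟨(fun j => ex u j, fun j => ex v j + ex v' j), ?_⟩
    apply XX_ext
    · intro j hj
      rw [DD_fst _ _ _ _ hj]
      have hj' : j < n / 4 + 1 := by omega
      have h1 : ex (emb n f).1 j = f.1 ⟨j, hj'⟩ := ex_fin (emb n f).1 ⟨j, hj'⟩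
      have h2 := huv ⟨j, hj'⟩
      have h3 : ex u j = u ⟨j, hj'⟩ := ex_fin u ⟨j, hj'⟩
      have h4 : ex v j = v ⟨j, hj'⟩ := ex_fin v ⟨j, hj'⟩
      rw [h1, ← h2, ex_mk _ _ (by omega), ex_mk (fun j => ex v j + ex v' j) _ (by omega), h3, h4,
        show n + 1 - 4 * j = n - 4 * j + 1 by omega]
      by_cases h : n - 4 * j = 0
      · rw [ex_out v' j (by omega), add_zero]
      · rw [cc_zero _ h, cc_zero _ h]
    · intro j hj
      rw [DD_snd _ _ _ _ hj]
      have hj' : j < n / 4 + 1 := by omega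
      have hj2 : j < (n + 3) / 4 := by omega
      have h1 : ex (emb n f).2 j = f.2 ⟨j, hj2⟩ := ex_fin (emb n f).2 ⟨j, hj2⟩
      have h2 := hv' ⟨j, hj2⟩
      have h3 : ex v' j = v' ⟨j, hj2⟩ := ex_fin v' ⟨j, hj2⟩
      have h4 : ex v j = v ⟨j, hj'⟩ := ex_fin v ⟨j, hj'⟩
      have h5 := hv ⟨j, hj'⟩ (by show n - 4 * j ≠ 0; omega)
      rw [h1, ← h2, ex_mk (fun j => ex v j + ex v' j) _ (by omega), h3, h4, h5, ρT_w, zero_add,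
        add_zero, show n + 1 - 4 * j = n - 4 * j + 1 by omega]

lemma finrank_tsub (m : ℕ) : Module.finrank (ZMod 2) (tsub A m) = if m = 0 then 3 else 2 := by
  by_cases h : m = 0
  · rw [show tsub A m = Iy A from if_pos h, if_pos h, finrank_Iy]
  · rw [show tsub A m = Ix A from if_neg h, if_neg h, finrank_Ix]

lemma finrank_esub (m : ℕ) :
    Module.finrank (ZMod 2) (esub A m) = if m = 1 then 3 else if m = 2 then 0 else 2 := by
  by_cases h : m = 1
  · rw [show esub A m = Iy A from if_pos h, if_pos h, finrank_Iy]
  · by_cases h2 : m = 2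
    · rw [show esub A m = ⊥ by simp [esub, h2], if_neg h, if_pos h2, finrank_bot]
    · rw [show esub A m = Ix A by simp [esub, h, h2], if_neg h, if_neg h2, finrank_Ix]

lemma finrank_DD (n : ℕ) : Module.finrank (ZMod 2) (LinearMap.range (DD (ρT (A := A)) n)) =
    (2 * (n / 4) + if n % 4 = 0 then 3 else 2) +
      (2 * ((n - 1) / 4) + if n = 0 then 0 else if n % 4 = 1 then 3 else if n % 4 = 2 then 0 else 2) := by
  rw [range_DD, LinearMap.finrank_range_of_inj (emb_inj n), Module.finrank_prod,
    Module.finrank_pi_fintype, Module.finrank_pi_fintype]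
  simp only [finrank_tsub, finrank_esub]
  congr 1
  · rw [Fin.sum_univ_eq_sum_range (fun j => if n - 4 * j = 0 then 3 else 2), Finset.sum_range_succ,
      Finset.sum_congr rfl (g := fun _ => 2) (fun j hj => if_neg (by
        have := Finset.mem_range.1 hj; omega)), Finset.sum_const, Finset.card_range]
    split_ifs <;> simp <;> omega
  · rw [Fin.sum_univ_eq_sum_range (fun j => if n - 4 * j = 1 then 3 else
      if n - 4 * j = 2 then 0 else 2)]
    rcases Nat.eq_zero_or_pos n with rfl | hn
    · simp
    · rw [show (n + 3) / 4 = (n - 1) / 4 + 1 by omega, Finset.sum_range_succ,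
        Finset.sum_congr rfl (g := fun _ => 2) (fun j hj => by
          have := Finset.mem_range.1 hj
          rw [if_neg (by omega), if_neg (by omega)]), Finset.sum_const, Finset.card_range]
      split_ifs <;> simp <;> omega

lemma finrank_XX (n : ℕ) :
    Module.finrank (ZMod 2) (XX A n) = 8 * (n / 4 + 1) + 8 * ((n + 3) / 4) := by
  rw [Module.finrank_prod, Module.finrank_pi_fintype, Module.finrank_pi_fintype]
  simp [finrank_A1, mul_comm]

theorem main (n : ℕ) :
    Module.finrank (ZMod 2) (HochschildHomology (ZMod 2) A n) =
      if n % 2 = 0 then 2 * n + 5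
      else if n % 4 = 1 then 2 * n + 6
      else 2 * n + 4 := by
  rw [((HHiso (A := A) n).toLinearEquiv).finrank_eq]
  cases n with
  | zero =>
    have h : _ = _ := gcx_fin0 (XX A) (DD (ρT (A := A))) DT_DT
    rw [finrank_XX, finrank_DD] at h
    have h2 : Module.finrank (ZMod 2) ((TT A).homology 0) = Module.finrank (ZMod 2)
      ((gcx (XX A) (DD (ρT (A := A))) DT_DT).homology 0) := rfl
    simp at h ⊢
    omega
  | succ n =>
    have h : _ = _ := gcx_fin1 (XX A) (DD (ρT (A := A))) DT_DT n
    rw [finrank_XX, finrank_DD, finrank_DD] at h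
    have h2 : Module.finrank (ZMod 2) ((TT A).homology (n + 1)) = Module.finrank (ZMod 2)
      ((gcx (XX A) (DD (ρT (A := A))) DT_DT).homology (n + 1)) := rfl
    rw [h2]
    obtain ⟨m, hm⟩ : ∃ m, n = 4 * m ∨ n = 4 * m + 1 ∨ n = 4 * m + 2 ∨ n = 4 * m + 3 :=
      ⟨n / 4, by omega⟩
    split_ifs at h ⊢ <;> first | contradiction | omega

noncomputable instance : PA1 A1 where
  sx := Sq1
  sy := Sq2
  xx := by
    have := RingQuot.mkAlgHom_rel (ZMod 2) A1Rel.sq1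
    simpa [Sq1] using this
  yy := by
    have := RingQuot.mkAlgHom_rel (ZMod 2) A1Rel.sq2
    apply eq_of_add
    simpa [Sq1, Sq2, mul_assoc] using this
  ind := by
    intro p hs hx hy hm ha a
    obtain ⟨a, rfl⟩ := RingQuot.mkAlgHom_surjective (ZMod 2) A1Rel a
    induction a using FreeAlgebra.induction with
    | grade0 r => rw [AlgHom.commutes]; exact hs r
    | grade1 i =>
      fin_cases i
      · exact hx
      · exact hy
    | mul a b h1 h2 => rw [map_mul]; exact hm _ _ h1 h2
    | add a b h1 h2 => rw [map_add]; exact ha _ _ h1 h2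
  lift := fun X Y h h' => RingQuot.liftAlgHom (ZMod 2)
    ⟨FreeAlgebra.lift (ZMod 2) ![X, Y], by
      rintro _ _ (_ | _)
      · simp [h]
      · simp [h', mul_assoc, two_eq]⟩
  lift_x := by
    intro B _ _ X Y h h'
    simp [Sq1]
  lift_y := by
    intro B _ _ X Y h h'
    simp [Sq2]

end HHA1

/-- The `F₂`-vector space dimension of the `n`-th Hochschild homology of `A(1)`:
`2n + 5` if `n` is even, `2n + 6` if `n ≡ 1 (mod 4)`, and `2n + 4` if `n ≡ 3 (mod 4)`. -/
theorem hochschildHomology_A1_dim (n : ℕ) :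
    Module.finrank (ZMod 2) (HochschildHomology (ZMod 2) A1 n) =
      if n % 2 = 0 then 2 * n + 5
      else if n % 4 = 1 then 2 * n + 6
      else 2 * n + 4 := by
  exact HHA1.main n
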